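/- Let N ≥ 1 and k ≥ 2. Let θ ∈ Δ_{N^k} be factored as θ = B^{k-1}_{k-1}(Θ^(k-1)) B^{k-2}_{k-2}(Θ^(k-2)) ⋯ B^0_0(Θ^(0)) with tuples Θ^(m) = (θ^(m)_1, …, θ^(m)_{N^m}) of vectors in Δ_N for m = 0, …, k-1, and let 𝒬 be a tuple of N^k vectors in Δ_N whose associated k-th order transition matrix Q^(k) satisfies θ = Q^(k) θ. Write θ^(0) := θ^(0)_1 ∈ Δ_N (the single vector of Θ^(0)). Then θ^(0) = S(Θ^(1), …, Θ^(m)) θ^(0) for every 1 ≤ m ≤ k-1, and θ^(0) = S(Θ^(1), …, Θ^(k-1), 𝒬) θ^(0). -/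

import Mathlib

open Matrix BigOperators Filter Topology

noncomputable section

/-- Cast a `Fin`-indexed matrix along equalities of the dimensions. -/
def castM {a b a' b' : ℕ} (ha : a = a') (hb : b = b') (A : Matrix (Fin a) (Fin b) ℝ) :
    Matrix (Fin a') (Fin b') ℝ :=
  Matrix.reindex (finCongr ha) (finCongr hb) A

/-- Kronecker product (row-major convention) of `Fin`-indexed real matrices. -/
def kron {a b c d : ℕ} (A : Matrix (Fin a) (Fin b) ℝ) (B : Matrix (Fin c) (Fin d) ℝ) :
    Matrix (Fin (a * c)) (Fin (b * d)) ℝ :=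
  Matrix.of fun i j => A i.divNat j.divNat * B i.modNat j.modNat

/-- Standard basis column vector `e_{n,i}` (as an `n × 1` matrix). -/
def eCol (n : ℕ) (i : Fin n) : Matrix (Fin n) (Fin 1) ℝ :=
  Matrix.of fun r _ => if r = i then (1 : ℝ) else 0

/-- Standard basis row vector `e_{n,i}ᵀ` (as a `1 × n` matrix). -/
def eRow (n : ℕ) (i : Fin n) : Matrix (Fin 1) (Fin n) ℝ :=
  Matrix.of fun _ c => if c = i then (1 : ℝ) else 0

/-- `E_{n,i} = e_{n,i} e_{n,i}ᵀ`. -/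
def EE (n : ℕ) (i : Fin n) : Matrix (Fin n) (Fin n) ℝ :=
  Matrix.of fun r c => if r = i ∧ c = i then (1 : ℝ) else 0

/-- All-ones row vector `1_nᵀ` (as a `1 × n` matrix). -/
def onesRow (n : ℕ) : Matrix (Fin 1) (Fin n) ℝ := Matrix.of fun _ _ => (1 : ℝ)

/-- A column vector (an `n × 1` matrix) is a simplex vector: nonnegative entries summing to 1. -/
def IsSimplex {n : ℕ} (v : Matrix (Fin n) (Fin 1) ℝ) : Prop :=
  (∀ i, 0 ≤ v i 0) ∧ ∑ i, v i 0 = 1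

/-- A matrix is column-stochastic: each column is a simplex vector. -/
def IsColStochastic {a b : ℕ} (A : Matrix (Fin a) (Fin b) ℝ) : Prop :=
  ∀ j, (∀ i, 0 ≤ A i j) ∧ ∑ i, A i j = 1

/-- The (0-based) index `b * i + j` corresponding to the 1-based index `b(i-1)+j`. -/
def pairIdx {a b : ℕ} (i : Fin a) (j : Fin b) : Fin (a * b) :=
  ⟨b * i.val + j.val, by
    have h : b * (i.val + 1) ≤ b * a := Nat.mul_le_mul le_rfl i.isLt
    have h2 : b * (i.val + 1) = b * i.val + b := by ring
    have h3 : b * a = a * b := Nat.mul_comm b a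
    have h4 : j.val < b := j.isLt
    omega⟩

/-- Commutation matrix `C_{n,m} = ∑_i e_{m,i}ᵀ ⊗ E_n ⊗ e_{m,i}`. -/
def commMat (n m : ℕ) : Matrix (Fin (n * m)) (Fin (n * m)) ℝ :=
  ∑ i : Fin m,
    castM (by ring) (by ring)
      (kron (kron (eRow m i) (1 : Matrix (Fin n) (Fin n) ℝ)) (eCol m i))

/-- Marginalization matrix `M^k_m = E_{N^m} ⊗ 1_Nᵀ ⊗ E_{N^{k-m}}`. -/
def Marg (N k m : ℕ) (hm : m ≤ k) : Matrix (Fin (N ^ k)) (Fin (N ^ (k + 1))) ℝ :=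
  castM (by rw [mul_one, ← pow_add]; exact congrArg (N ^ ·) (by omega))
    (by rw [← pow_succ, ← pow_add]; exact congrArg (N ^ ·) (by omega))
    (kron (kron (1 : Matrix (Fin (N ^ m)) (Fin (N ^ m)) ℝ) (onesRow N))
      (1 : Matrix (Fin (N ^ (k - m))) (Fin (N ^ (k - m))) ℝ))

/-- Branching matrix `B^k_m(𝒬) = ∑_{i,j} E_{N^m,i} ⊗ q_{N^{k-m}(i-1)+j} ⊗ E_{N^{k-m},j}`. -/
def Branch (N k m : ℕ) (hm : m ≤ k) (q : Fin (N ^ k) → Matrix (Fin N) (Fin 1) ℝ) :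
    Matrix (Fin (N ^ (k + 1))) (Fin (N ^ k)) ℝ :=
  castM (by rw [← pow_succ, ← pow_add]; exact congrArg (N ^ ·) (by omega))
    (by rw [mul_one, ← pow_add]; exact congrArg (N ^ ·) (by omega))
    (∑ i : Fin (N ^ m), ∑ j : Fin (N ^ (k - m)),
      kron (kron (EE (N ^ m) i)
          (q (finCongr (by rw [← pow_add]; exact congrArg (N ^ ·) (by omega)) (pairIdx i j))))
        (EE (N ^ (k - m)) j))

/-- Cycling matrix `C^k_m = C_{N^m, N^{k-m}}`. -/
def Cyc (N k m : ℕ) (hm : m ≤ k) : Matrix (Fin (N ^ k)) (Fin (N ^ k)) ℝ :=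
  castM (by rw [← pow_add]; exact congrArg (N ^ ·) (by omega))
    (by rw [← pow_add]; exact congrArg (N ^ ·) (by omega))
    (commMat (N ^ m) (N ^ (k - m)))

/-- The block `Q_i` of a tuple `𝒬`: the `N × N` matrix with columns
`q_{N(i-1)+1}, …, q_{N(i-1)+N}`. -/
def Qblk (N k : ℕ) (hk : 1 ≤ k) (q : Fin (N ^ k) → Matrix (Fin N) (Fin 1) ℝ)
    (i : Fin (N ^ (k - 1))) : Matrix (Fin N) (Fin N) ℝ :=
  Matrix.of fun r c =>
    q (finCongr (by rw [← pow_succ]; exact congrArg (N ^ ·) (by omega)) (pairIdx i c)) r 0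

/-- The k-th order transition matrix `Q^(k) = C_{N,N^{k-1}} ∑_i E_{N^{k-1},i} ⊗ Q_i`. -/
def TransMat (N k : ℕ) (hk : 1 ≤ k) (q : Fin (N ^ k) → Matrix (Fin N) (Fin 1) ℝ) :
    Matrix (Fin (N ^ k)) (Fin (N ^ k)) ℝ :=
  castM (by rw [← pow_succ']; exact congrArg (N ^ ·) (by omega))
      (by rw [← pow_succ']; exact congrArg (N ^ ·) (by omega)) (commMat N (N ^ (k - 1))) *
    ∑ i : Fin (N ^ (k - 1)),
      castM (by rw [← pow_succ]; exact congrArg (N ^ ·) (by omega))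
        (by rw [← pow_succ]; exact congrArg (N ^ ·) (by omega))
        (kron (EE (N ^ (k - 1)) i) (Qblk N k hk q i))

/-- `MChain N m n = M^m_m M^{m+1}_{m+1} ⋯ M^{m+n}_{m+n}`. -/
def MChain (N m : ℕ) : (n : ℕ) → Matrix (Fin (N ^ m)) (Fin (N ^ (m + n + 1))) ℝ
  | 0 => Marg N m m le_rfl
  | n + 1 => MChain N m n * Marg N (m + n + 1) (m + n + 1) le_rfl

/-- `BChain N Q m n = B^{m+n}_{m+n}(𝒬^{(m+n)}) ⋯ B^m_m(𝒬^{(m)})`. -/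
def BChain (N : ℕ) (Q : (j : ℕ) → Fin (N ^ j) → Matrix (Fin N) (Fin 1) ℝ) (m : ℕ) :
    (n : ℕ) → Matrix (Fin (N ^ (m + n + 1))) (Fin (N ^ m)) ℝ
  | 0 => Branch N m m le_rfl (Q m)
  | n + 1 => Branch N (m + n + 1) (m + n + 1) le_rfl (Q (m + n + 1)) * BChain N Q m n

/-- The k‑shift matrix `S(𝒬^(m), …, 𝒬^(k))` with `k = m + n`:
`M^m_m ⋯ M^k_k C^{k+1}_1 B^k_k(𝒬^(k)) ⋯ B^m_m(𝒬^(m))`. -/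
def Shift (N m n : ℕ) (Q : (j : ℕ) → Fin (N ^ j) → Matrix (Fin N) (Fin 1) ℝ) :
    Matrix (Fin (N ^ m)) (Fin (N ^ m)) ℝ :=
  MChain N m n * Cyc N (m + n + 1) 1 (by omega) * BChain N Q m n

/-- ℓ¹ norm of a column vector. -/
def l1 {n : ℕ} (v : Matrix (Fin n) (Fin 1) ℝ) : ℝ := ∑ i, |v i 0|

/-!
Index `ℝ^{N^k}` by words of length `k`. Then `M^k_m` sums over the letter at position `m`, `B^k_k`
appends a random letter at the end and `C^{k+1}_1` moves the last letter to the front, so that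
`Q^(k) = M^k_k C^{k+1}_1 B^k_k(𝒬)`: a new letter is drawn and put first, and the oldest one, which
stands last, is forgotten.

Let `P_n` be the product of the first `n` factors of `θ`. Since `M^n_n B^n_n = E`, forgetting the
last letter of `P_{n+1}` gives `P_n`. Hence
`M^1_1 ⋯ M^k_k C^{k+1}_1 B^k_k(𝒬) P_k = M^1_1 ⋯ M^{k-1}_{k-1} P_k`, which is `P_1 = θ^(0)`; this is
the identity for `S(Θ^(1), …, Θ^(k-1), 𝒬)`.

For the lower orders, stationarity makes `P_k` shift invariant: forgetting its first letter forgets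
the letter just drawn, so `M^{k-1}_0 P_k = M^{k-1}_{k-1} P_k = P_{k-1}`. As `M_0` commutes with
forgetting the last letter, `M^n_0 P_{n+1} = P_n` for all `n < k`. Finally `M^1_1 ⋯ M^m_m C^{m+1}_1`
is the marginal of the last letter, that is `M^1_0 ⋯ M^m_0`, and therefore maps `P_{m+1}` to `P_1`.
-/

/-- The words of length `k` over the alphabet `Fin N`, encoded as base-`N` numerals with the most
significant letter first. -/
abbrev Word (N k : ℕ) : Type := Fin (N ^ k)

namespace Word

variable {N : ℕ}

/-- Concatenation of words. The length of the result is a separate parameter, so that lengths which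
are only propositionally equal need no transport; letters are treated as words of length `1`. -/
def append {m l k : ℕ} (h : m + l = k) : Word N m × Word N l ≃ Word N k :=
  finProdFinEquiv.trans (finCongr (by rw [← h, pow_add]))

/-- The letter forming a word of length `1`. -/
def letter : Word N 1 ≃ Fin N := finCongr (pow_one N)

lemma val_append {m l k : ℕ} (h : m + l = k) (x : Word N m) (y : Word N l) :
    (append h (x, y) : ℕ) = y + N ^ l * x := rfl

lemma append_assoc {a b c i j k : ℕ} (hi : a + b = i) (hk : i + c = k) (hj : b + c = j)
    (hk' : a + j = k) (x : Word N a) (y : Word N b) (z : Word N c) :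
    append hk (append hi (x, y), z) = append hk' (x, append hj (y, z)) := by
  subst hi hj
  ext
  simp only [val_append]
  ring

lemma val_empty (x : Word N 0) : (x : ℕ) = 0 := Nat.lt_one_iff.1 x.isLt

lemma append_empty {k : ℕ} (x : Word N k) (y : Word N 0) : append (add_zero k) (x, y) = x := by
  ext
  simp only [val_append, val_empty, pow_zero, zero_add, one_mul]

lemma empty_append {k : ℕ} (x : Word N 0) (y : Word N k) : append (zero_add k) (x, y) = y := by
  ext
  simp only [val_append, val_empty, mul_zero, add_zero]

end Word

open Word

section Entries

lemma castM_apply_of_val_eq {a b a' b' : ℕ} (ha : a = a') (hb : b = b')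
    (A : Matrix (Fin a) (Fin b) ℝ) {i : Fin a} {j : Fin b} {i' : Fin a'} {j' : Fin b'}
    (hi : (i : ℕ) = i') (hj : (j : ℕ) = j') : castM ha hb A i' j' = A i j := by
  subst ha hb
  obtain rfl := Fin.ext hi
  obtain rfl := Fin.ext hj
  rfl

lemma kron_apply_prod {a b c d : ℕ} (A : Matrix (Fin a) (Fin b) ℝ) (B : Matrix (Fin c) (Fin d) ℝ)
    (i : Fin a) (j : Fin b) (k : Fin c) (l : Fin d) :
    kron A B (finProdFinEquiv (i, k)) (finProdFinEquiv (j, l)) = A i j * B k l := by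
  obtain ⟨hi, hk⟩ := Prod.mk.inj (finProdFinEquiv.symm_apply_apply (i, k))
  obtain ⟨hj, hl⟩ := Prod.mk.inj (finProdFinEquiv.symm_apply_apply (j, l))
  simp only [kron, Matrix.of_apply, hi, hj, hk, hl]

lemma commMat_apply_prod {n m : ℕ} (a b : Fin n) (i j : Fin m) {c : Fin (n * m)}
    (hc : (c : ℕ) = finProdFinEquiv (j, b)) :
    commMat n m (finProdFinEquiv (a, i)) c = if (a, i) = (b, j) then 1 else 0 := by
  have entry (t : Fin m) :
      castM (by ring) (by ring) (kron (kron (eRow m t) (1 : Matrix (Fin n) (Fin n) ℝ)) (eCol m t))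
        (finProdFinEquiv (a, i)) c = eRow m t 0 j * (1 : Matrix (Fin n) (Fin n) ℝ) a b *
          eCol m t i 0 := by
    rw [castM_apply_of_val_eq (i := finProdFinEquiv (finProdFinEquiv ((0 : Fin 1), a), i))
      (j := finProdFinEquiv (finProdFinEquiv (j, b), (0 : Fin 1))) _ _ _ (by simp) (by simp [hc]),
      kron_apply_prod, kron_apply_prod]
  simp only [commMat, Matrix.sum_apply, entry]
  rw [Fintype.sum_eq_single i fun t ht => by simp [eCol, ht.symm]]
  by_cases hab : a = b <;> by_cases hij : i = j <;>
    simp [eRow, eCol, Matrix.one_apply, hab, hij, eq_comm]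

variable {N : ℕ}

lemma marg_apply_append {m l k : ℕ} (h : m + l = k) (h' : m + 1 + l = k + 1)
    (x x' : Word N m) (y y' : Word N l) (c : Word N 1) :
    Marg N k m (by omega) (append h (x, y)) (append h' (append rfl (x', c), y')) =
      if (x, y) = (x', y') then 1 else 0 := by
  obtain rfl : l = k - m := by omega
  rw [Marg, castM_apply_of_val_eq (i := finProdFinEquiv (finProdFinEquiv (x, (0 : Fin 1)), y))
    (j := finProdFinEquiv (finProdFinEquiv (x', letter c), y')) _ _ _
    (by simp [val_append]) (by simp [val_append, letter]), kron_apply_prod, kron_apply_prod]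
  by_cases hx : x = x' <;> by_cases hy : y = y' <;> simp [onesRow, Matrix.one_apply, hx, hy]

lemma cyc_apply_append {m l k : ℕ} (h : m + l = k) (h' : l + m = k)
    (x x' : Word N m) (y y' : Word N l) :
    Cyc N k m (by omega) (append h (x, y)) (append h' (y', x')) =
      if (x, y) = (x', y') then 1 else 0 := by
  obtain rfl : l = k - m := by omega
  rw [Cyc, castM_apply_of_val_eq (i := finProdFinEquiv (x, y))
    (j := finCongr (mul_comm _ _) (finProdFinEquiv (y', x'))) _ _ _
    (by simp [val_append]) (by simp [val_append]), commMat_apply_prod _ x' _ y' rfl]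

lemma branch_apply_append {m l k : ℕ} (h : m + l = k) (h' : m + 1 + l = k + 1)
    (q : Word N k → Matrix (Fin N) (Fin 1) ℝ) (x x' : Word N m) (y y' : Word N l) (c : Word N 1) :
    Branch N k m (by omega) q (append h' (append rfl (x, c), y)) (append h (x', y')) =
      if (x, y) = (x', y') then q (append h (x, y)) (letter c) 0 else 0 := by
  obtain rfl : l = k - m := by omega
  have pairIdx_eq (i : Word N m) (j : Word N (k - m)) (hk : N ^ m * N ^ (k - m) = N ^ k) :
      finCongr hk (pairIdx i j) = append h (i, j) := Fin.ext (add_comm _ _)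
  rw [Branch, castM_apply_of_val_eq (i := finProdFinEquiv (finProdFinEquiv (x, letter c), y))
    (j := finProdFinEquiv (finProdFinEquiv (x', (0 : Fin 1)), y')) _ _ _
    (by simp [val_append, letter]) (by simp [val_append])]
  simp only [Matrix.sum_apply, kron_apply_prod, pairIdx_eq]
  rw [Fintype.sum_eq_single x fun i hi => by simp [EE, hi.symm],
    Fintype.sum_eq_single y fun j hj => by simp [EE, hj.symm]]
  by_cases hx : x = x' <;> by_cases hy : y = y' <;> simp [EE, hx, hy, eq_comm]

end Entries

section Action

variable {N : ℕ} {ι : Type*}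

lemma marg_mul_append {m l k : ℕ} (h : m + l = k) (h' : m + 1 + l = k + 1)
    (v : Matrix (Word N (k + 1)) ι ℝ) (x : Word N m) (y : Word N l) (s : ι) :
    (Marg N k m (by omega) * v) (append h (x, y)) s =
      ∑ c, v (append h' (append rfl (x, c), y)) s := by
  rw [Matrix.mul_apply, ← (append h').sum_comp, Fintype.sum_prod_type,
    ← (append rfl).sum_comp, Fintype.sum_prod_type, Fintype.sum_eq_single x]
  · refine Finset.sum_congr rfl fun c _ => ?_
    simp [marg_apply_append h]
  · intro x' hx
    simp [marg_apply_append h, hx.symm]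

lemma marg_self_mul_apply {k : ℕ} (v : Matrix (Word N (k + 1)) ι ℝ) (x : Word N k) (s : ι) :
    (Marg N k k le_rfl * v) x s = ∑ c, v (append rfl (x, c)) s := by
  simpa only [append_empty] using
    marg_mul_append (add_zero k) (add_zero (k + 1)) v x ⟨0, by simp⟩ s

lemma marg_zero_mul_apply {k : ℕ} (v : Matrix (Word N (k + 1)) ι ℝ) (x : Word N k) (s : ι) :
    (Marg N k 0 k.zero_le * v) x s = ∑ c, v (append (add_comm 1 k) (c, x)) s := by
  simpa only [empty_append] using
    marg_mul_append (zero_add k) (by omega) v ⟨0, by simp⟩ x s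

lemma cyc_mul_append {m l k : ℕ} (h : m + l = k) (h' : l + m = k)
    (v : Matrix (Word N k) ι ℝ) (x : Word N m) (y : Word N l) (s : ι) :
    (Cyc N k m (by omega) * v) (append h (x, y)) s = v (append h' (y, x)) s := by
  rw [Matrix.mul_apply, ← (append h').sum_comp, Fintype.sum_eq_single (y, x)]
  · simp [cyc_apply_append h]
  · rintro ⟨y', x'⟩ hne
    rw [cyc_apply_append h, if_neg (by grind), zero_mul]

lemma branch_self_apply_append {k : ℕ} (q : Word N k → Matrix (Fin N) (Fin 1) ℝ) (x z : Word N k)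
    (c : Word N 1) :
    Branch N k k le_rfl q (append rfl (x, c)) z = if x = z then q x (letter c) 0 else 0 := by
  let e : Word N 0 := ⟨0, by simp⟩
  simpa [append_empty] using
    branch_apply_append (add_zero k) (add_zero (k + 1)) q x z e e c

lemma branch_self_mul_append {k : ℕ} (q : Word N k → Matrix (Fin N) (Fin 1) ℝ)
    (v : Matrix (Word N k) ι ℝ) (x : Word N k) (c : Word N 1) (s : ι) :
    (Branch N k k le_rfl q * v) (append rfl (x, c)) s = q x (letter c) 0 * v x s := by
  simp [Matrix.mul_apply, branch_self_apply_append]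

end Action

section Identities

variable {N : ℕ}

lemma marg_mul_marg_last {m k : ℕ} (hm : m ≤ k) :
    Marg N k m hm * Marg N (k + 1) (k + 1) le_rfl =
      Marg N k k le_rfl * Marg N (k + 1) m (by omega) := by
  have hsplit : m + (k - m) = k := by omega
  ext z s
  obtain ⟨⟨x, y⟩, rfl⟩ := (append hsplit).surjective z
  rw [← Matrix.mul_one (Marg N (k + 1) (k + 1) _), ← Matrix.mul_one (Marg N (k + 1) m _),
    marg_mul_append hsplit (by omega), marg_self_mul_apply]
  simp only [marg_self_mul_apply]
  rw [Finset.sum_comm]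
  refine Finset.sum_congr rfl fun d _ => ?_
  rw [append_assoc hsplit rfl rfl (by omega), marg_mul_append _ (by omega)]
  exact Finset.sum_congr rfl fun c _ => by rw [append_assoc]

lemma marg_zero_mul_cyc_one (k : ℕ) :
    Marg N k 0 k.zero_le * Cyc N (k + 1) 1 (by omega) = Marg N k k le_rfl := by
  rw [← Matrix.mul_one (Marg N k k le_rfl), ← Matrix.mul_one (Cyc N _ _ _)]
  ext x s
  simp only [marg_zero_mul_apply, marg_self_mul_apply, cyc_mul_append (add_comm 1 k) rfl]

lemma marg_mul_cyc {m k : ℕ} (hm : m ≤ k) :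
    Marg N k m hm * Cyc N (k + 1) m (by omega) = Cyc N k m hm * Marg N k 0 k.zero_le := by
  have hsplit : m + (k - m) = k := by omega
  have hsplit' : k - m + m = k := by omega
  rw [← Matrix.mul_one (Cyc N (k + 1) m _)]
  ext z s
  obtain ⟨⟨x, y⟩, rfl⟩ := (append hsplit).surjective z
  rw [cyc_mul_append hsplit hsplit', marg_mul_append hsplit (by omega),
    ← Matrix.mul_one (Marg N k 0 _), marg_zero_mul_apply]
  refine Finset.sum_congr rfl fun c _ => ?_
  rw [append_assoc rfl _ (add_comm 1 _) (by omega), cyc_mul_append _ (by omega),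
    append_assoc _ _ hsplit']

lemma cyc_self (k : ℕ) : Cyc N k k le_rfl = 1 := by
  rw [← Matrix.mul_one (Cyc N k k _)]
  ext x s
  let e : Word N 0 := ⟨0, by simp⟩
  rw [← append_empty x e, cyc_mul_append _ (zero_add k), empty_append, append_empty]

lemma marg_mul_branch {k : ℕ} {q : Word N k → Matrix (Fin N) (Fin 1) ℝ}
    (hq : ∀ x, ∑ c, q x c 0 = 1) : Marg N k k le_rfl * Branch N k k le_rfl q = 1 := by
  ext x z
  have hx : ∑ c, q x (letter c) 0 = 1 := (letter.sum_comp fun c => q x c 0).trans (hq x)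
  by_cases hxz : x = z <;>
    simp [marg_self_mul_apply, branch_self_apply_append, Matrix.one_apply, hxz, ← hx]

lemma cyc_one_eq_castM_commMat {k : ℕ} (hk : 1 ≤ k) (h : N * N ^ (k - 1) = N ^ k) :
    Cyc N k 1 hk = castM h h (commMat N (N ^ (k - 1))) := by
  have cast_congr (n : ℕ) (hn : n = N) (hn' : n * N ^ (k - 1) = N ^ k) :
      castM hn' hn' (commMat n (N ^ (k - 1))) = castM h h (commMat N (N ^ (k - 1))) := by
    subst hn
    rfl
  exact cast_congr _ (pow_one N) _

lemma sum_castM_kron_qblk_apply_append {k : ℕ} (hk : 1 ≤ k) (h : N ^ (k - 1) * N = N ^ k)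
    (h' : k - 1 + 1 = k) (q : Word N k → Matrix (Fin N) (Fin 1) ℝ) (x x' : Word N (k - 1))
    (c d : Word N 1) :
    (∑ i, castM h h (kron (EE (N ^ (k - 1)) i) (Qblk N k hk q i)))
        (append h' (x, c)) (append h' (x', d)) =
      if x = x' then q (append h' (x, d)) (letter c) 0 else 0 := by
  have entry (i : Word N (k - 1)) :
      castM h h (kron (EE (N ^ (k - 1)) i) (Qblk N k hk q i))
          (append h' (x, c)) (append h' (x', d)) =
        EE (N ^ (k - 1)) i x x' * Qblk N k hk q i (letter c) (letter d) := by
    rw [castM_apply_of_val_eq (i := finProdFinEquiv (x, letter c))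
      (j := finProdFinEquiv (x', letter d)) _ _ _
      (by simp [val_append, letter]) (by simp [val_append, letter]), kron_apply_prod]
  have pairIdx_eq (hk' : N ^ (k - 1) * N = N ^ k) :
      finCongr hk' (pairIdx x (letter d)) = append h' (x, d) := by
    ext
    simp [pairIdx, letter, val_append, add_comm]
  simp only [Matrix.sum_apply, entry]
  rw [Fintype.sum_eq_single x fun i hi => by simp [EE, hi.symm], Qblk, Matrix.of_apply, pairIdx_eq]
  simp [EE, eq_comm]

lemma transMat_eq_marg_mul_cyc_mul_branch {k : ℕ} (hk : 1 ≤ k)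
    (q : Word N k → Matrix (Fin N) (Fin 1) ℝ) :
    TransMat N k hk q =
      Marg N k k le_rfl * (Cyc N (k + 1) 1 (by omega) * Branch N k k le_rfl q) := by
  have hcons : 1 + (k - 1) = k := by omega
  have hsnoc : k - 1 + 1 = k := by omega
  ext z w
  obtain ⟨⟨c, x⟩, rfl⟩ := (append hcons).surjective z
  obtain ⟨⟨x', d⟩, rfl⟩ := (append hsnoc).surjective w
  have hright (e : Word N 1) :
      (Cyc N (k + 1) 1 (by omega) * Branch N k k le_rfl q)
          (append rfl (append hcons (c, x), e)) (append hsnoc (x', d)) =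
        if (x, e) = (x', d) then q (append hsnoc (x, e)) (letter c) 0 else 0 := by
    rw [append_assoc hcons rfl hsnoc (add_comm 1 k), cyc_mul_append _ rfl,
      branch_self_apply_append]
    simp only [(append hsnoc).injective.eq_iff]
  rw [TransMat, ← cyc_one_eq_castM_commMat hk, cyc_mul_append hcons hsnoc,
    sum_castM_kron_qblk_apply_append, marg_self_mul_apply]
  simp [hright, ite_and]

end Identities

section JointLaw

lemma mul_castM_one {a b c : ℕ} (A : Matrix (Fin a) (Fin b) ℝ) (h : b = c) :
    A * castM rfl h 1 = castM rfl h A := by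
  subst h
  exact Matrix.mul_one A

variable {N : ℕ}

/-- The law `B^{n-1}_{n-1}(Q^(n-1)) ⋯ B^0_0(Q^(0))` on words of length `n`, whose letters are drawn
from left to right, each from the vector attached to the word of the preceding letters. -/
def jointLaw (Q : (j : ℕ) → Word N j → Matrix (Fin N) (Fin 1) ℝ) :
    (n : ℕ) → Matrix (Word N n) (Fin 1) ℝ
  | 0 => castM rfl (pow_zero N) 1
  | n + 1 => Branch N n n le_rfl (Q n) * jointLaw Q n

variable (Q : (j : ℕ) → Word N j → Matrix (Fin N) (Fin 1) ℝ)

lemma bChain_mul_jointLaw (m n : ℕ) :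
    BChain N Q m n * jointLaw Q m = jointLaw Q (m + n + 1) := by
  induction n with
  | zero => rfl
  | succ n ih => rw [BChain, Matrix.mul_assoc, ih]; rfl

lemma castM_bChain_zero {k : ℕ} (hk : 1 ≤ k) (h : N ^ (0 + (k - 1) + 1) = N ^ k) :
    castM h (pow_zero N) (BChain N Q 0 (k - 1)) = jointLaw Q k := by
  have castM_jointLaw {n : ℕ} (hn : n = k) (hn' : N ^ n = N ^ k) :
      castM hn' rfl (jointLaw Q n) = jointLaw Q k := by
    subst hn
    rfl
  rw [← castM_jointLaw (by omega) h, ← bChain_mul_jointLaw, jointLaw]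
  exact congrArg (castM h rfl) (mul_castM_one _ _).symm

lemma jointLaw_one : jointLaw Q 1 = castM (pow_one N).symm rfl (Q 0 ⟨0, by simp⟩) := by
  ext z s
  obtain ⟨⟨x, c⟩, rfl⟩ := (append (zero_add 1)).surjective z
  obtain rfl : x = ⟨0, by simp⟩ := Fin.ext (val_empty x)
  obtain rfl : s = 0 := Subsingleton.elim _ _
  have jointLaw_zero : jointLaw Q 0 ⟨0, by simp⟩ 0 = 1 :=
    (castM_apply_of_val_eq rfl (pow_zero N) 1 rfl rfl).trans (Matrix.one_apply_eq _)
  rw [jointLaw, branch_self_mul_append, empty_append, jointLaw_zero, mul_one]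
  rfl

variable {Q}

lemma jointLaw_congr {Q' : (j : ℕ) → Word N j → Matrix (Fin N) (Fin 1) ℝ} {n : ℕ}
    (h : ∀ j < n, Q j = Q' j) : jointLaw Q n = jointLaw Q' n := by
  induction n with
  | zero => rfl
  | succ n ih => rw [jointLaw, jointLaw, ih fun j hj => h j (by omega), h n (by omega)]

lemma marg_mul_jointLaw_succ {n : ℕ} (hQ : ∀ x, ∑ c, Q n x c 0 = 1) :
    Marg N n n le_rfl * jointLaw Q (n + 1) = jointLaw Q n := by
  rw [jointLaw, ← Matrix.mul_assoc, marg_mul_branch hQ, Matrix.one_mul]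

end JointLaw

section Marginals

variable {N : ℕ} {ι : Type*} {P : (n : ℕ) → Matrix (Word N n) ι ℝ}

lemma mChain_mul_of_marg_last {m n : ℕ}
    (hlast : ∀ j, m ≤ j → j < m + n → Marg N j j le_rfl * P (j + 1) = P j)
    {v : Matrix (Word N (m + n + 1)) ι ℝ} (hv : Marg N (m + n) (m + n) le_rfl * v = P (m + n)) :
    MChain N m n * v = P m := by
  induction n with
  | zero => exact hv
  | succ n ih =>
    rw [MChain, Matrix.mul_assoc]
    exact ih (fun j hmj hj => hlast j hmj (by omega)) (hv ▸ hlast (m + n) (by omega) (by omega))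

lemma mChain_mul_marg_last (m n : ℕ) :
    MChain N m n * Marg N (m + n + 1) (m + n + 1) le_rfl =
      MChain N m n * Marg N (m + n + 1) m (by omega) := by
  induction n with
  | zero => exact marg_mul_marg_last le_rfl
  | succ n ih =>
    calc MChain N m (n + 1) * Marg N (m + n + 2) (m + n + 2) le_rfl
        = MChain N m n * Marg N (m + n + 1) m (by omega) *
            Marg N (m + n + 2) (m + n + 2) le_rfl := by rw [MChain, ih]
      _ = MChain N m (n + 1) * Marg N (m + n + 2) m (by omega) := by
          rw [MChain, Matrix.mul_assoc, marg_mul_marg_last, Matrix.mul_assoc]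

lemma mChain_mul_cyc_mul_of_marg_zero {m n : ℕ}
    (hfirst : ∀ j, m ≤ j → j ≤ m + n → Marg N j 0 j.zero_le * P (j + 1) = P j) :
    MChain N m n * (Cyc N (m + n + 1) m (by omega) * P (m + n + 1)) = P m := by
  induction n with
  | zero =>
    change Marg N m m _ * (Cyc N (m + 1) m _ * P (m + 1)) = P m
    rw [← Matrix.mul_assoc, marg_mul_cyc, cyc_self, Matrix.one_mul, hfirst m le_rfl (by omega)]
  | succ n ih =>
    calc MChain N m (n + 1) * (Cyc N (m + n + 2) m (by omega) * P (m + n + 2))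
        = MChain N m n * Marg N (m + n + 1) m (by omega) *
            (Cyc N (m + n + 2) m (by omega) * P (m + n + 2)) := by
          rw [MChain, mChain_mul_marg_last]
      _ = MChain N m n * (Cyc N (m + n + 1) m (by omega) *
            (Marg N (m + n + 1) 0 (Nat.zero_le _) * P (m + n + 2))) := by
          rw [Matrix.mul_assoc, ← Matrix.mul_assoc (Marg N _ m _), marg_mul_cyc, Matrix.mul_assoc]
      _ = P m := by
          rw [hfirst (m + n + 1) (by omega) (by omega)]
          exact ih fun j hmj hj => hfirst j hmj (by omega)

lemma marg_zero_mul_of_marg_last {k : ℕ}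
    (hlast : ∀ j < k + 1, Marg N j j le_rfl * P (j + 1) = P j)
    (htop : Marg N k 0 k.zero_le * P (k + 1) = P k) {n : ℕ} (hn : n ≤ k) :
    Marg N n 0 n.zero_le * P (n + 1) = P n := by
  induction hn using Nat.decreasingInduction with
  | self => exact htop
  | of_succ n hn ih =>
    rw [← hlast (n + 1) (by omega), ← Matrix.mul_assoc, marg_mul_marg_last, Matrix.mul_assoc, ih,
      hlast n (by omega)]

lemma marg_zero_mul_of_stationary {k : ℕ} {q : Word N (k + 1) → Matrix (Fin N) (Fin 1) ℝ}
    (hq : ∀ x, ∑ c, q x c 0 = 1) {v : Matrix (Word N (k + 1)) ι ℝ}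
    (hstat : v = TransMat N (k + 1) (by omega) q * v) :
    Marg N k 0 k.zero_le * v = Marg N k k le_rfl * v := by
  calc Marg N k 0 k.zero_le * v
      = Marg N k 0 k.zero_le * Marg N (k + 1) (k + 1) le_rfl *
          (Cyc N (k + 2) 1 (by omega) * (Branch N (k + 1) (k + 1) le_rfl q * v)) := by
        conv_lhs => rw [hstat, transMat_eq_marg_mul_cyc_mul_branch]
        simp only [Matrix.mul_assoc]
    _ = Marg N k k le_rfl * (Marg N (k + 1) 0 (Nat.zero_le _) * Cyc N (k + 2) 1 (by omega) *
          Branch N (k + 1) (k + 1) le_rfl q * v) := by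
        rw [marg_mul_marg_last]
        simp only [Matrix.mul_assoc]
    _ = Marg N k k le_rfl * v := by
        rw [marg_zero_mul_cyc_one, marg_mul_branch hq, Matrix.one_mul]

end Marginals

section Shift

variable {N : ℕ} {Q : (j : ℕ) → Word N j → Matrix (Fin N) (Fin 1) ℝ}

lemma shift_mul_jointLaw (m n : ℕ) :
    Shift N m n Q * jointLaw Q m =
      MChain N m n * (Cyc N (m + n + 1) 1 (by omega) * jointLaw Q (m + n + 1)) := by
  rw [Shift, Matrix.mul_assoc, bChain_mul_jointLaw, Matrix.mul_assoc]

lemma marg_zero_mul_jointLaw_of_stationary {k : ℕ} (hQ : ∀ j < k + 1, ∀ x, ∑ c, Q j x c 0 = 1)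
    {q : Word N (k + 1) → Matrix (Fin N) (Fin 1) ℝ} (hq : ∀ x, ∑ c, q x c 0 = 1)
    (hstat : jointLaw Q (k + 1) = TransMat N (k + 1) (by omega) q * jointLaw Q (k + 1))
    {n : ℕ} (hn : n ≤ k) :
    Marg N n 0 n.zero_le * jointLaw Q (n + 1) = jointLaw Q n :=
  marg_zero_mul_of_marg_last (fun j hj => marg_mul_jointLaw_succ (hQ j hj))
    ((marg_zero_mul_of_stationary hq hstat).trans (marg_mul_jointLaw_succ (hQ k k.lt_succ_self))) hn

lemma shift_one_mul_jointLaw_of_stationary {k : ℕ} (hk : 1 ≤ k)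
    (hQ : ∀ j < k, ∀ x, ∑ c, Q j x c 0 = 1)
    {q : Word N k → Matrix (Fin N) (Fin 1) ℝ} (hq : ∀ x, ∑ c, q x c 0 = 1)
    (hstat : jointLaw Q k = TransMat N k hk q * jointLaw Q k) {n : ℕ} (hn : n + 1 < k) :
    Shift N 1 n Q * jointLaw Q 1 = jointLaw Q 1 := by
  obtain ⟨k, rfl⟩ := Nat.exists_eq_add_of_le' hk
  rw [shift_mul_jointLaw]
  exact mChain_mul_cyc_mul_of_marg_zero fun j _ hj =>
    marg_zero_mul_jointLaw_of_stationary hQ hq hstat (by omega)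

lemma shift_update_mul_jointLaw_of_stationary {m n : ℕ} (hmn : 1 ≤ m + n)
    (hQ : ∀ j < m + n, ∀ x, ∑ c, Q j x c 0 = 1)
    {q : Word N (m + n) → Matrix (Fin N) (Fin 1) ℝ}
    (hstat : jointLaw Q (m + n) = TransMat N (m + n) hmn q * jointLaw Q (m + n)) :
    Shift N m n (Function.update Q (m + n) q) * jointLaw Q m = jointLaw Q m := by
  have jointLaw_update {j : ℕ} (hj : j ≤ m + n) :
      jointLaw (Function.update Q (m + n) q) j = jointLaw Q j :=
    jointLaw_congr fun i hi => Function.update_of_ne (by omega) ..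
  have last_step : Marg N (m + n) (m + n) le_rfl * (Cyc N (m + n + 1) 1 (by omega) *
      jointLaw (Function.update Q (m + n) q) (m + n + 1)) = jointLaw Q (m + n) := by
    rw [jointLaw, Function.update_self, jointLaw_update le_rfl]
    conv_rhs => rw [hstat, transMat_eq_marg_mul_cyc_mul_branch, Matrix.mul_assoc, Matrix.mul_assoc]
  rw [← jointLaw_update (Nat.le_add_right m n), shift_mul_jointLaw,
    jointLaw_update (Nat.le_add_right m n)]
  exact mChain_mul_of_marg_last (fun j _ hj => marg_mul_jointLaw_succ (hQ j hj)) last_step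

lemma update_eq_dite {k : ℕ} (q : Word N k → Matrix (Fin N) (Fin 1) ℝ) :
    Function.update Q k q =
      fun j => if h : j = k then fun i => q (finCongr (by rw [h]) i) else Q j := by
  funext j
  by_cases h : j = k
  · subst h
    simp
  · simp [h]

end Shift

theorem stmt11_general (N k : ℕ) (hk : 1 ≤ k)
    (Θ : (m : ℕ) → Fin (N ^ m) → Matrix (Fin N) (Fin 1) ℝ)
    (hΘ : ∀ m, m ≤ k - 1 → ∀ i, ∑ c, Θ m i c 0 = 1)
    (q : Fin (N ^ k) → Matrix (Fin N) (Fin 1) ℝ) (hq : ∀ i, ∑ c, q i c 0 = 1)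
    (θ : Matrix (Fin (N ^ k)) (Fin 1) ℝ)
    (hθ : θ = castM (congrArg (N ^ ·) (by omega)) (pow_zero N) (BChain N Θ 0 (k - 1)))
    (hstat : θ = TransMat N k hk q * θ) :
    (∀ m, 1 ≤ m → m ≤ k - 1 →
      castM (pow_one N).symm rfl (Θ 0 ⟨0, by simp⟩) =
        Shift N 1 (m - 1) Θ * castM (pow_one N).symm rfl (Θ 0 ⟨0, by simp⟩)) ∧
    castM (pow_one N).symm rfl (Θ 0 ⟨0, by simp⟩) =
      Shift N 1 (k - 1)
          (fun j => if h : j = k then (fun i => q (finCongr (by rw [h]) i)) else Θ j) *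
        castM (pow_one N).symm rfl (Θ 0 ⟨0, by simp⟩) := by
  rw [castM_bChain_zero Θ hk] at hθ
  subst hθ
  rw [← jointLaw_one, ← update_eq_dite]
  have hΘ' : ∀ m < k, ∀ i, ∑ c, Θ m i c 0 = 1 := fun m hm => hΘ m (by omega)
  refine ⟨fun m hm hmk => ?_, ?_⟩
  · exact (shift_one_mul_jointLaw_of_stationary hk hΘ' hq hstat (by omega)).symm
  · obtain ⟨n, rfl⟩ := Nat.exists_eq_add_of_le hk
    rw [Nat.add_sub_cancel_left]
    exact (shift_update_mul_jointLaw_of_stationary hk hΘ' hstat).symm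

/-- Lemma on the marginal stationary distribution:
if `θ = B^{k-1}_{k-1}(Θ^(k-1)) ⋯ B^0_0(Θ^(0))` is stationary for `Q^(k)`, then the
marginal `θ^(0)` satisfies `θ^(0) = S(Θ^(1),…,Θ^(m)) θ^(0)` for `1 ≤ m ≤ k-1` and
`θ^(0) = S(Θ^(1),…,Θ^(k-1),𝒬) θ^(0)`. -/
theorem stmt11 (N k : ℕ) (hN : 1 ≤ N) (hk : 2 ≤ k)
    (Θ : (m : ℕ) → Fin (N ^ m) → Matrix (Fin N) (Fin 1) ℝ)
    (hΘ : ∀ m, m ≤ k - 1 → ∀ i, IsSimplex (Θ m i))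
    (q : Fin (N ^ k) → Matrix (Fin N) (Fin 1) ℝ) (hq : ∀ i, IsSimplex (q i))
    (θ : Matrix (Fin (N ^ k)) (Fin 1) ℝ)
    (hθ : θ = castM (congrArg (N ^ ·) (by omega)) (by norm_num) (BChain N Θ 0 (k - 1)))
    (hstat : θ = TransMat N k (by omega) q * θ) :
    (∀ m, 1 ≤ m → m ≤ k - 1 →
      castM (pow_one N).symm rfl (Θ 0 ⟨0, by simp⟩) =
        Shift N 1 (m - 1) Θ * castM (pow_one N).symm rfl (Θ 0 ⟨0, by simp⟩)) ∧
    castM (pow_one N).symm rfl (Θ 0 ⟨0, by simp⟩) =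
      Shift N 1 (k - 1)
          (fun j => if h : j = k then (fun i => q (finCongr (by rw [h]) i)) else Θ j) *
        castM (pow_one N).symm rfl (Θ 0 ⟨0, by simp⟩) :=
  stmt11_general N k (by omega) Θ (fun m hm i => (hΘ m hm i).2) q (fun i => (hq i).2) θ hθ hstat
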